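/- Let (X_{n,θ})_{n∈ℕ, θ∈Θ}, (Y_{n,θ})_{n∈ℕ, θ∈Θ} and (X_θ)_{θ∈Θ} be random variables on (Ω, F), with the X-families taking values in a separable Banach space B. Assume (X_{n,θ}) converges uniformly in distribution over Θ to (X_θ) and (Y_{n,θ}) converges uniformly in probability over Θ to 0. Then: (i) if (Y_{n,θ}) is B-valued, (X_{n,θ} + Y_{n,θ}) converges uniformly in distribution over Θ to (X_θ); (ii) if (Y_{n,θ}) is real-valued and (X_θ)_{θ∈Θ} is uniformly tight, then (Y_{n,θ} · X_{n,θ}) converges uniformly in probability over Θ to 0. -/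

import Mathlib

open MeasureTheory ProbabilityTheory Filter
open scoped ENNReal NNReal RealInnerProductSpace

noncomputable section

/-- Bounded-Lipschitz distance between the laws of `U` and `V` under `μ`, i.e. the supremum of
`|E f(U) - E f(V)|` over functions `f` with values in `[-1, 1]` that are `1`-Lipschitz. -/
def dBL {Ω B : Type*} [MeasurableSpace Ω] [PseudoMetricSpace B]
    (μ : Measure Ω) (U V : Ω → B) : ℝ :=
  ⨆ f : {g : B → ℝ // LipschitzWith 1 g ∧ ∀ x, |g x| ≤ 1},
    |(∫ ω, f.1 (U ω) ∂μ) - ∫ ω, f.1 (V ω) ∂μ|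

/-- `(X_{n,θ})` converges uniformly in distribution over `Θ` to `(Xlim_θ)`. -/
def TendstoUnifInDist {Ω Θ B : Type*} [MeasurableSpace Ω] [PseudoMetricSpace B]
    (P : Θ → Measure Ω) (X : ℕ → Θ → Ω → B) (Xlim : Θ → Ω → B) : Prop :=
  Filter.Tendsto (fun n => ⨆ θ, dBL (P θ) (X n θ) (Xlim θ)) Filter.atTop (nhds 0)

/-- `(X_{n,θ})` converges uniformly in probability over `Θ` to `(Xlim_θ)`. -/
def TendstoUnifInProb {Ω Θ B : Type*} [MeasurableSpace Ω] [NormedAddCommGroup B]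
    (P : Θ → Measure Ω) (X : ℕ → Θ → Ω → B) (Xlim : Θ → Ω → B) : Prop :=
  ∀ ε : ℝ, 0 < ε →
    Filter.Tendsto (fun n => ⨆ θ, P θ {ω | ε ≤ ‖X n θ ω - Xlim θ ω‖}) Filter.atTop (nhds 0)

/-- The family `(X_θ)` is uniformly tight over `Θ`. -/
def UniformlyTight {Ω Θ B : Type*} [MeasurableSpace Ω] [TopologicalSpace B]
    (P : Θ → Measure Ω) (X : Θ → Ω → B) : Prop :=
  ∀ ε : ℝ, 0 < ε → ∃ K : Set B, IsCompact K ∧ (⨆ θ, P θ {ω | X θ ω ∉ K}) < ENNReal.ofReal ε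

lemma us_abs_int_le {Ω : Type*} [MeasurableSpace Ω] (μ : Measure Ω) [IsProbabilityMeasure μ]
    (g : Ω → ℝ) (hg : ∀ x, |g x| ≤ 1) : |∫ ω, g ω ∂μ| ≤ 1 := by
  have h := norm_integral_le_of_norm_le_const (μ := μ) (f := g) (C := 1)
    (Eventually.of_forall fun x => by simpa using hg x)
  simpa using h

lemma us_term_le_two {Ω B : Type*} [MeasurableSpace Ω] [PseudoMetricSpace B]
    (μ : Measure Ω) [IsProbabilityMeasure μ] (U V : Ω → B)
    (f : {g : B → ℝ // LipschitzWith 1 g ∧ ∀ x, |g x| ≤ 1}) :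
    |(∫ ω, f.1 (U ω) ∂μ) - ∫ ω, f.1 (V ω) ∂μ| ≤ 2 := by
  have h1 := us_abs_int_le μ (fun ω => f.1 (U ω)) (fun x => f.2.2 _)
  have h2 := us_abs_int_le μ (fun ω => f.1 (V ω)) (fun x => f.2.2 _)
  rw [abs_le] at *
  constructor <;> linarith [h1.1, h1.2, h2.1, h2.2]

lemma us_dBL_nonneg {Ω B : Type*} [MeasurableSpace Ω] [PseudoMetricSpace B]
    (μ : Measure Ω) (U V : Ω → B) : 0 ≤ dBL μ U V :=
  Real.iSup_nonneg fun _ => abs_nonneg _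

lemma us_dBL_le_two {Ω B : Type*} [MeasurableSpace Ω] [PseudoMetricSpace B]
    (μ : Measure Ω) [IsProbabilityMeasure μ] (U V : Ω → B) : dBL μ U V ≤ 2 :=
  Real.iSup_le (us_term_le_two μ U V) (by norm_num)

lemma us_term_le_dBL {Ω B : Type*} [MeasurableSpace Ω] [PseudoMetricSpace B]
    (μ : Measure Ω) [IsProbabilityMeasure μ] (U V : Ω → B)
    (f : {g : B → ℝ // LipschitzWith 1 g ∧ ∀ x, |g x| ≤ 1}) :
    |(∫ ω, f.1 (U ω) ∂μ) - ∫ ω, f.1 (V ω) ∂μ| ≤ dBL μ U V :=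
  le_ciSup (f := fun f : {g : B → ℝ // LipschitzWith 1 g ∧ ∀ x, |g x| ≤ 1} =>
    |(∫ ω, f.1 (U ω) ∂μ) - ∫ ω, f.1 (V ω) ∂μ|)
    ⟨2, by rintro _ ⟨g, rfl⟩; exact us_term_le_two μ U V g⟩ f

/-- Uniform distributional convergence, unfolded. -/
lemma us_dist_iff {Ω Θ B : Type*} [MeasurableSpace Ω] [PseudoMetricSpace B]
    (P : Θ → Measure Ω) (hP : ∀ θ, IsProbabilityMeasure (P θ))
    (X : ℕ → Θ → Ω → B) (Xlim : Θ → Ω → B) :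
    TendstoUnifInDist P X Xlim ↔
      ∀ δ : ℝ, 0 < δ → ∀ᶠ n in atTop, ∀ θ, dBL (P θ) (X n θ) (Xlim θ) ≤ δ := by
  have hnn : ∀ n, 0 ≤ ⨆ θ, dBL (P θ) (X n θ) (Xlim θ) := fun n =>
    Real.iSup_nonneg fun θ => us_dBL_nonneg _ _ _
  unfold TendstoUnifInDist
  rw [Metric.tendsto_nhds]
  constructor
  · intro h δ hδ
    filter_upwards [h δ hδ] with n hn θ
    rw [Real.dist_eq, sub_zero, abs_of_nonneg (hnn n)] at hn
    refine le_trans (le_ciSup (f := fun θ => dBL (P θ) (X n θ) (Xlim θ)) ⟨2, ?_⟩ θ) hn.le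
    rintro _ ⟨θ', rfl⟩
    have := hP θ'
    exact us_dBL_le_two _ _ _
  · intro h δ hδ
    filter_upwards [h (δ / 2) (by positivity)] with n hn
    rw [Real.dist_eq, sub_zero, abs_of_nonneg (hnn n)]
    exact lt_of_le_of_lt (Real.iSup_le hn (by positivity)) (by linarith)

/-- Uniform convergence in probability to zero, unfolded. -/
lemma us_prob_iff {Ω Θ B : Type*} [MeasurableSpace Ω] [NormedAddCommGroup B]
    (P : Θ → Measure Ω) (hP : ∀ θ, IsProbabilityMeasure (P θ))
    (Y : ℕ → Θ → Ω → B) :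
    TendstoUnifInProb P Y (fun _ _ => 0) ↔
      ∀ ε : ℝ, 0 < ε → ∀ δ : ℝ, 0 < δ →
        ∀ᶠ n in atTop, ∀ θ, (P θ).real {ω | ε ≤ ‖Y n θ ω‖} ≤ δ := by
  unfold TendstoUnifInProb
  simp only [sub_zero]
  refine forall₂_congr fun ε hε => ?_
  rw [ENNReal.tendsto_nhds_zero]
  constructor
  · intro h δ hδ
    filter_upwards [h (ENNReal.ofReal δ) (by simpa using hδ)] with n hn θ
    exact ENNReal.toReal_le_of_le_ofReal hδ.le
      ((le_iSup (fun θ => P θ {ω | ε ≤ ‖Y n θ ω‖}) θ).trans hn)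
  · intro h δ hδ
    by_cases hd : δ = ⊤
    · simp [hd]
    filter_upwards [h δ.toReal (ENNReal.toReal_pos hδ.ne' hd)] with n hn
    refine iSup_le fun θ => ?_
    have := hP θ
    exact (ENNReal.toReal_le_toReal (measure_ne_top _ _) hd).1 (hn θ)

lemma us_integrable {Ω B : Type*} [MeasurableSpace Ω] [PseudoMetricSpace B] [MeasurableSpace B]
    [BorelSpace B] (μ : Measure Ω) [IsProbabilityMeasure μ] (U : Ω → B) (hU : Measurable U)
    (f : B → ℝ) (hf : LipschitzWith 1 f) (hb : ∀ x, |f x| ≤ 1) :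
    Integrable (fun ω => f (U ω)) μ :=
  Integrable.of_bound (hf.continuous.measurable.comp hU).aestronglyMeasurable 1
    (Eventually.of_forall fun ω => by simpa using hb (U ω))

lemma us_add {Ω B : Type*} [MeasurableSpace Ω] [NormedAddCommGroup B] [MeasurableSpace B]
    [BorelSpace B] [SecondCountableTopology B] (μ : Measure Ω) [IsProbabilityMeasure μ]
    (U V : Ω → B) (hU : Measurable U) (hV : Measurable V)
    (f : B → ℝ) (hf : LipschitzWith 1 f) (hb : ∀ x, |f x| ≤ 1) (δ : ℝ) (hδ : 0 < δ) :
    |(∫ ω, f (U ω + V ω) ∂μ) - ∫ ω, f (U ω) ∂μ| ≤ δ + 2 * μ.real {ω | δ ≤ ‖V ω‖} := by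
  have hA : MeasurableSet {ω | δ ≤ ‖V ω‖} := measurableSet_le measurable_const hV.norm
  have hi : Integrable (Set.indicator {ω | δ ≤ ‖V ω‖} (fun _ => (2 : ℝ))) μ :=
    (integrable_const _).indicator hA
  rw [← integral_sub (us_integrable μ (fun ω => U ω + V ω) (hU.add hV) f hf hb)
    (us_integrable μ U hU f hf hb)]
  calc _ ≤ ∫ ω, |f (U ω + V ω) - f (U ω)| ∂μ := abs_integral_le_integral_abs
    _ ≤ ∫ ω, (δ + Set.indicator {ω | δ ≤ ‖V ω‖} (fun _ => (2 : ℝ)) ω) ∂μ := by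
        refine integral_mono ((us_integrable μ (fun ω => U ω + V ω) (hU.add hV) f hf hb).sub
          (us_integrable μ U hU f hf hb)).abs ((integrable_const _).add hi) fun ω => ?_
        by_cases h : δ ≤ ‖V ω‖
        · have h1 := abs_le.1 (hb (U ω + V ω))
          have h2 := abs_le.1 (hb (U ω))
          simp only [Set.indicator, Set.mem_ofPred_eq, h, if_true]
          rw [abs_le]
          constructor <;> linarith [h1.1, h1.2, h2.1, h2.2]
        · have h1 := hf.dist_le_mul (U ω + V ω) (U ω)
          simp only [Real.dist_eq, NNReal.coe_one, one_mul, dist_eq_norm, add_sub_cancel_left,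
            Real.norm_eq_abs] at h1
          simp only [Set.indicator, Set.mem_ofPred_eq, h, if_false]
          linarith [not_le.1 h]
    _ = _ := by
        rw [integral_add (integrable_const _) hi, integral_indicator_const _ hA]
        simp [mul_comm]

/-- The cut-off function of the norm. -/
lemma us_cut {B : Type*} [NormedAddCommGroup B] (R : ℝ) :
    LipschitzWith 1 (fun x : B => max 0 (min 1 (‖x‖ - R))) ∧
      ∀ x : B, |max 0 (min 1 (‖x‖ - R))| ≤ 1 := by
  constructor
  · have h : LipschitzWith 1 (fun x : B => ‖x‖ - R) := by
      refine LipschitzWith.of_dist_le_mul fun x y => ?_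
      simpa [Real.dist_eq, dist_eq_norm] using abs_norm_sub_norm_le x y
    exact (h.const_min 1).const_max 0
  · intro x
    rw [abs_of_nonneg (le_max_left _ _)]
    exact max_le (by norm_num) (min_le_left _ _)

lemma us_tail {Ω B : Type*} [MeasurableSpace Ω] [NormedAddCommGroup B] [MeasurableSpace B]
    [BorelSpace B] (μ : Measure Ω) [IsProbabilityMeasure μ]
    (U V : Ω → B) (hU : Measurable U) (hV : Measurable V) (R : ℝ) (K : Set B)
    (hK : IsCompact K) (hKR : ∀ x ∈ K, ‖x‖ ≤ R) :
    μ.real {ω | R + 1 ≤ ‖U ω‖} ≤ dBL μ U V + μ.real {ω | V ω ∉ K} := by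
  have hc := us_cut (B := B) R
  have h1 := us_term_le_dBL μ U V ⟨_, hc⟩
  have hA : MeasurableSet {ω | R + 1 ≤ ‖U ω‖} := measurableSet_le measurable_const hU.norm
  have hC : MeasurableSet {ω | V ω ∉ K} := hV hK.isClosed.measurableSet.compl
  have h2 : μ.real {ω | R + 1 ≤ ‖U ω‖} ≤ ∫ ω, max 0 (min 1 (‖U ω‖ - R)) ∂μ := by
    rw [← integral_indicator_one hA]
    refine integral_mono ((integrable_const _).indicator hA)
      (us_integrable μ U hU _ hc.1 hc.2) fun ω => ?_
    by_cases h : R + 1 ≤ ‖U ω‖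
    · simp only [Set.indicator, Set.mem_ofPred_eq, h, if_true, Pi.one_apply]
      exact le_max_of_le_right (le_min le_rfl (by linarith))
    · simp only [Set.indicator, Set.mem_ofPred_eq, h, if_false]
      exact le_max_left _ _
  have h3 : ∫ ω, max 0 (min 1 (‖V ω‖ - R)) ∂μ ≤ μ.real {ω | V ω ∉ K} := by
    rw [← integral_indicator_one hC]
    refine integral_mono (us_integrable μ V hV _ hc.1 hc.2)
      ((integrable_const _).indicator hC) fun ω => ?_
    by_cases h : V ω ∈ K
    · simp only [Set.indicator, Set.mem_ofPred_eq, h, not_true_eq_false, if_false]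
      exact max_le le_rfl ((min_le_right _ _).trans (by linarith [hKR _ h]))
    · simp only [Set.indicator, Set.mem_ofPred_eq, h, not_false_eq_true, if_true, Pi.one_apply]
      exact max_le (by norm_num) (min_le_left _ _)
  have h4 := (abs_le.1 h1).2
  simp only at h4
  linarith

/-- Uniform Slutsky lemma: (i) adding a family converging uniformly in probability to zero
does not change a uniform distributional limit; (ii) multiplying by real variables converging
uniformly in probability to `0` gives uniform convergence in probability to `0`, provided the
family of distributional limits is uniformly tight. -/
theorem uniform_slutsky
    {Ω Θ B : Type*} [MeasurableSpace Ω]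
    [NormedAddCommGroup B] [NormedSpace ℝ B] [CompleteSpace B]
    [TopologicalSpace.SeparableSpace B] [MeasurableSpace B] [BorelSpace B]
    (P : Θ → Measure Ω) (hP : ∀ θ, IsProbabilityMeasure (P θ))
    (X : ℕ → Θ → Ω → B) (Xlim : Θ → Ω → B)
    (hXmeas : ∀ n θ, Measurable (X n θ)) (hXlimmeas : ∀ θ, Measurable (Xlim θ))
    (hconv : TendstoUnifInDist P X Xlim) :
    (∀ Y : ℕ → Θ → Ω → B, (∀ n θ, Measurable (Y n θ)) →
        TendstoUnifInProb P Y (fun _ _ => 0) →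
        TendstoUnifInDist P (fun n θ ω => X n θ ω + Y n θ ω) Xlim) ∧
      (UniformlyTight P Xlim → ∀ Y : ℕ → Θ → Ω → ℝ, (∀ n θ, Measurable (Y n θ)) →
        TendstoUnifInProb P Y (fun _ _ => 0) →
        TendstoUnifInProb P (fun n θ ω => Y n θ ω • X n θ ω) (fun _ _ => 0)) := by
  have : SecondCountableTopology B := UniformSpace.secondCountable_of_separable B
  rw [us_dist_iff P hP] at hconv
  constructor
  · intro Y hY hYp
    rw [us_prob_iff P hP] at hYp
    rw [us_dist_iff P hP]
    intro δ hδ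
    filter_upwards [hconv (δ / 4) (by positivity),
      hYp (δ / 4) (by positivity) (δ / 4) (by positivity)] with n h1 h2 θ
    have := hP θ
    refine Real.iSup_le (fun f => ?_) hδ.le
    have h3 := us_add (P θ) (X n θ) (Y n θ) (hXmeas n θ) (hY n θ) f.1 f.2.1 f.2.2 (δ / 4)
      (by positivity)
    have h4 := us_term_le_dBL (P θ) (X n θ) (Xlim θ) f
    refine (abs_sub_le _ (∫ ω, f.1 (X n θ ω) ∂(P θ)) _).trans ?_
    linarith [h1 θ, h2 θ]
  · intro hT Y hY hYp
    rw [us_prob_iff P hP] at hYp ⊢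
    intro ε hε δ hδ
    obtain ⟨K, hK, hKs⟩ := hT (δ / 3) (by positivity)
    obtain ⟨R, hR, hKR⟩ := hK.isBounded.exists_pos_norm_le
    filter_upwards [hconv (δ / 3) (by positivity),
      hYp (ε / (R + 1)) (by positivity) (δ / 3) (by positivity)] with n h1 h2 θ
    have := hP θ
    have h3 := us_tail (P θ) (X n θ) (Xlim θ) (hXmeas n θ) (hXlimmeas θ) R K hK hKR
    have h4 : (P θ).real {ω | Xlim θ ω ∉ K} ≤ δ / 3 :=
      ENNReal.toReal_le_of_le_ofReal (by positivity)
        ((le_iSup (fun θ => P θ {ω | Xlim θ ω ∉ K}) θ).trans hKs.le)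
    have h5 : {ω | ε ≤ ‖Y n θ ω • X n θ ω‖} ⊆
        {ω | ε / (R + 1) ≤ ‖Y n θ ω‖} ∪ {ω | R + 1 ≤ ‖X n θ ω‖} := by
      intro ω hω
      by_contra hcon
      simp only [Set.mem_union, Set.mem_ofPred_eq, not_or, not_le] at hcon hω
      rw [norm_smul] at hω
      have h6 : ‖Y n θ ω‖ * ‖X n θ ω‖ < ε / (R + 1) * (R + 1) :=
        mul_lt_mul'' hcon.1 hcon.2 (norm_nonneg _) (norm_nonneg _)
      rw [div_mul_cancel₀ _ (by positivity)] at h6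
      linarith
    have h6 := (measureReal_mono (μ := P θ) h5).trans (measureReal_union_le _ _)
    linarith [h1 θ, h2 θ]
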